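/- arXiv:math/0608207 — 2 statements merged into one kernel-verified Lean document; each statement's English description precedes it below -/
import Mathlib

section
/- Let p(t) = Σ_{k≥0} a_k t^k with 0 ≤ a_k < 1 and Σ a_k = 1, and let p^[n] denote the n-th iterate with coefficients a_k^[n]. Let a^[n] = sup{a_k^[n] : k ≥ 1}. Then (a^[n])_{n∈ℕ} is monotone decreasing and a^[n] → 0 as n → ∞. -/
open Filter Topology

/-- Coefficient of `t^k` in the composition `p ∘ q` of power series with coefficient
sequences `a` and `b`. -/
noncomputable def compCoeff (a b : ℕ → ℝ) (k : ℕ) : ℝ :=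
  ∑' i : ℕ, a i * ∑ f ∈ Finset.Nat.antidiagonalTuple i k, ∏ l, b (f l)

/-- Coefficients of the iterates: `iterCoeff a (n-1) k = a_k^[n]`, with
`iterCoeff a 0 = a` the coefficients of `p^[1] = p`. -/
noncomputable def iterCoeff (a : ℕ → ℝ) : ℕ → ℕ → ℝ
  | 0 => a
  | n + 1 => compCoeff a (iterCoeff a n)

/-!
The coefficients of `p` are the offspring law of a Galton–Watson process, those of its iterates
`p^[n]` the laws of the generation sizes.

Monotonicity: let `q = p^[n]` have constant term `c` and all other coefficients at most `m`.
Multiplying out one factor at a time bounds the positive-degree coefficients of `q ^ i` by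
`m (1 + c + ⋯ + c ^ (i - 1))`, so those of `p ∘ q` are at most `m (1 - p(c)) / (1 - c)`. This is at
most `m`, because `c = p^[n](0) ≤ p^[n+1](0) = p(c)`.

Convergence: since `p^[n+1] = p^[n] ∘ p`, the coefficients of `p^[n+1]` average those of the powers
`p ^ i` with weights `a_i^[n]`, and two facts suffice.
* Each weight with `i ≥ 1` tends to `0`: if `p(t) ≠ t`, then `p^[n](t)` is monotone in `n`, so its
  increments `p^[n](p(t)) - p^[n](t)` tend to `0`, and they dominate `a_i^[n] |p(t) ^ i - t ^ i|`.
* The largest coefficient `S i` of `p ^ i` tends to `0`: `p ^ n` has more than `n` coefficients that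
  are at least some `w > 0`, whence `S (i + n) ≤ w + (1 - (n + 1) w) S i` and `n * lim S ≤ 1`.
-/

open PowerSeries
open Finset.HasAntidiagonal (antidiagonal mem_antidiagonal)

/-- Probability generating series: a real power series whose coefficients are nonnegative and
sum to `1`, so that they are the weights of a probability measure on `ℕ`. -/
structure IsProbSeries (f : ℝ⟦X⟧) : Prop where
  coeff_nonneg : ∀ k, 0 ≤ coeff k f
  hasSum_coeff : HasSum (fun k => coeff k f) 1

/-- The function `t ↦ ∑ k, f_k t ^ k` represented by the power series `f`; it is only meaningful
where the series converges, and for a probability generating series this includes `|t| ≤ 1`. -/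
noncomputable def genFun (f : ℝ⟦X⟧) (t : ℝ) : ℝ := ∑' k, coeff k f * t ^ k

/-- Composition `f ∘ g` of power series, with coefficients `∑ i, f_i (g ^ i)_k`. As `g` may have a
nonzero constant term, these are infinite sums of reals, unlike in `PowerSeries.subst`. -/
noncomputable def seriesComp (f g : ℝ⟦X⟧) : ℝ⟦X⟧ :=
  mk fun k => ∑' i, coeff i f * coeff k (g ^ i)

/-- The iterates of `f` under composition. The index is shifted as in `iterCoeff`:
`seriesIter f n` is the `(n + 1)`-st iterate. -/
noncomputable def seriesIter (f : ℝ⟦X⟧) (n : ℕ) : ℝ⟦X⟧ := (seriesComp f)^[n] f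

theorem sum_antidiagonalTuple_prod_eq_coeff_pow {R : Type*} [CommSemiring R] (b : ℕ → R)
    (i k : ℕ) :
    ∑ f ∈ Finset.Nat.antidiagonalTuple i k, ∏ l, b (f l) = coeff k (mk b ^ i) := by
  have mk_pow_eq_prod : mk b ^ i = ∏ _l : Fin i, mk b := by simp
  rw [mk_pow_eq_prod, coeff_prod]
  refine Finset.sum_nbij' Finsupp.equivFunOnFinite.symm (⇑) ?_ ?_ ?_ ?_ ?_ <;>
    simp [Finset.Nat.mem_antidiagonalTuple, Finset.mem_finsuppAntidiag]

theorem mk_compCoeff (a b : ℕ → ℝ) : mk (compCoeff a b) = seriesComp (mk a) (mk b) := by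
  ext k
  simp only [seriesComp, coeff_mk, compCoeff, sum_antidiagonalTuple_prod_eq_coeff_pow]

theorem seriesIter_succ (f : ℝ⟦X⟧) (n : ℕ) :
    seriesIter f (n + 1) = seriesComp f (seriesIter f n) :=
  Function.iterate_succ_apply' ..

theorem mk_iterCoeff (a : ℕ → ℝ) (n : ℕ) : mk (iterCoeff a n) = seriesIter (mk a) n := by
  induction n with
  | zero => rfl
  | succ n ih => rw [iterCoeff, mk_compCoeff, ih, seriesIter_succ]

theorem genFun_zero (f : ℝ⟦X⟧) : genFun f 0 = coeff 0 f := by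
  rw [genFun, tsum_eq_single 0 fun k hk => by simp [hk], pow_zero, mul_one]

theorem genFun_X (t : ℝ) : genFun X t = t := by
  rw [genFun, tsum_eq_single 1 fun k hk => by simp [coeff_X, hk], coeff_one_X, one_mul, pow_one]

theorem coeff_zero_seriesComp (f g : ℝ⟦X⟧) :
    coeff 0 (seriesComp f g) = genFun f (coeff 0 g) := by
  simp [seriesComp, genFun]

theorem tendsto_succ_sub_self_of_tendsto {u : ℕ → ℝ} {l : ℝ} (hu : Tendsto u atTop (𝓝 l)) :
    Tendsto (fun n => u (n + 1) - u n) atTop (𝓝 0) := by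
  simpa using ((tendsto_add_atTop_iff_nat 1).2 hu).sub hu

theorem sum_antidiagonal_fst {M : Type*} [AddCommMonoid M] (h : ℕ → M) (k : ℕ) :
    ∑ x ∈ antidiagonal k, h x.1 = ∑ j ∈ Finset.range (k + 1), h j := by
  rw [Finset.Nat.antidiagonal_eq_map, Finset.sum_map]; rfl

theorem sum_antidiagonal_snd {M : Type*} [AddCommMonoid M] (h : ℕ → M) (k : ℕ) :
    ∑ x ∈ antidiagonal k, h x.2 = ∑ j ∈ Finset.range (k + 1), h j := by
  rw [Finset.Nat.antidiagonal_eq_map', Finset.sum_map]; rfl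

theorem isProbSeries_one : IsProbSeries 1 where
  coeff_nonneg k := by rw [coeff_one]; positivity
  hasSum_coeff := by simpa only [coeff_one] using hasSum_ite_eq 0 (1 : ℝ)

theorem isProbSeries_X : IsProbSeries X where
  coeff_nonneg k := by rw [coeff_X]; positivity
  hasSum_coeff := by simpa only [coeff_X] using hasSum_ite_eq 1 (1 : ℝ)

namespace IsProbSeries

variable {f g h : ℝ⟦X⟧} {t : ℝ}

theorem coeff_le_one (hf : IsProbSeries f) (k : ℕ) : coeff k f ≤ 1 :=
  le_hasSum hf.hasSum_coeff k fun j _ => hf.coeff_nonneg j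

theorem coeff_mem_Icc (hf : IsProbSeries f) (k : ℕ) : coeff k f ∈ Set.Icc 0 1 :=
  ⟨hf.coeff_nonneg k, hf.coeff_le_one k⟩

theorem sum_coeff_le_one (hf : IsProbSeries f) (s : Finset ℕ) : ∑ k ∈ s, coeff k f ≤ 1 :=
  sum_le_hasSum s (fun k _ => hf.coeff_nonneg k) hf.hasSum_coeff

theorem bddAbove_range_coeff (hf : IsProbSeries f) {ι : Type*} (e : ι → ℕ) :
    BddAbove (Set.range fun k => coeff (e k) f) :=
  ⟨1, Set.forall_mem_range.2 fun k => hf.coeff_le_one (e k)⟩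

theorem summable_norm_genFun (hf : IsProbSeries f) (ht : |t| ≤ 1) :
    Summable fun k => ‖coeff k f * t ^ k‖ := by
  refine hf.hasSum_coeff.summable.of_nonneg_of_le (fun k => norm_nonneg _) fun k => ?_
  rw [norm_mul, norm_pow, Real.norm_of_nonneg (hf.coeff_nonneg k)]
  exact mul_le_of_le_one_right (hf.coeff_nonneg k) (pow_le_one₀ (norm_nonneg t) ht)

theorem hasSum_genFun (hf : IsProbSeries f) (ht : |t| ≤ 1) :
    HasSum (fun k => coeff k f * t ^ k) (genFun f t) :=
  (hf.summable_norm_genFun ht).of_norm.hasSum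

theorem hasSum_genFun_of_mem_Icc (hf : IsProbSeries f) (ht : t ∈ Set.Icc 0 1) :
    HasSum (fun k => coeff k f * t ^ k) (genFun f t) :=
  hf.hasSum_genFun ((abs_of_nonneg ht.1).trans_le ht.2)

theorem genFun_one (hf : IsProbSeries f) : genFun f 1 = 1 := by
  simpa [genFun] using hf.hasSum_coeff.tsum_eq

theorem genFun_monotoneOn (hf : IsProbSeries f) : MonotoneOn (genFun f) (Set.Icc 0 1) :=
  fun _ hs _ ht hst => hasSum_le
    (fun k => mul_le_mul_of_nonneg_left (pow_le_pow_left₀ hs.1 hst k) (hf.coeff_nonneg k))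
    (hf.hasSum_genFun_of_mem_Icc hs) (hf.hasSum_genFun_of_mem_Icc ht)

theorem genFun_mem_Icc (hf : IsProbSeries f) (ht : t ∈ Set.Icc 0 1) :
    genFun f t ∈ Set.Icc 0 1 :=
  ⟨tsum_nonneg fun k => mul_nonneg (hf.coeff_nonneg k) (pow_nonneg ht.1 k),
    (hf.genFun_monotoneOn ht (Set.right_mem_Icc.2 zero_le_one) ht.2).trans_eq hf.genFun_one⟩

theorem hasSum_genFun_mul (hf : IsProbSeries f) (hg : IsProbSeries g) (ht : |t| ≤ 1) :
    HasSum (fun k => coeff k (f * g) * t ^ k) (genFun f t * genFun g t) := by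
  have coeff_mul_eq (k : ℕ) : coeff k (f * g) * t ^ k = ∑ x ∈ antidiagonal k,
      coeff x.1 f * t ^ x.1 * (coeff x.2 g * t ^ x.2) := by
    rw [coeff_mul, Finset.sum_mul]
    refine Finset.sum_congr rfl fun x hx => ?_
    rw [← mem_antidiagonal.1 hx, pow_add, mul_mul_mul_comm]
  have hf' := hf.summable_norm_genFun ht
  have hg' := hg.summable_norm_genFun ht
  simp only [coeff_mul_eq]
  rw [genFun, genFun, tsum_mul_tsum_eq_tsum_sum_antidiagonal_of_summable_norm hf' hg']
  exact (summable_norm_sum_mul_antidiagonal_of_summable_norm hf' hg').of_norm.hasSum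

theorem mul (hf : IsProbSeries f) (hg : IsProbSeries g) : IsProbSeries (f * g) where
  coeff_nonneg k := by
    rw [coeff_mul]
    exact Finset.sum_nonneg fun x _ => mul_nonneg (hf.coeff_nonneg _) (hg.coeff_nonneg _)
  hasSum_coeff := by
    simpa [hf.genFun_one, hg.genFun_one] using hf.hasSum_genFun_mul hg (t := 1) (by simp)

theorem pow (hf : IsProbSeries f) (i : ℕ) : IsProbSeries (f ^ i) := by
  induction i with
  | zero => simpa using isProbSeries_one
  | succ i ih => simpa only [pow_succ] using ih.mul hf

theorem genFun_pow (hf : IsProbSeries f) (ht : |t| ≤ 1) (i : ℕ) :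
    genFun (f ^ i) t = genFun f t ^ i := by
  induction i with
  | zero => simp [genFun, coeff_one]
  | succ i ih =>
    rw [pow_succ, pow_succ, ← ih]
    exact ((hf.pow i).hasSum_genFun_mul hf ht).tsum_eq

theorem hasSum_coeff_comp (hf : IsProbSeries f) (hg : IsProbSeries g) (k : ℕ) :
    HasSum (fun i => coeff i f * coeff k (g ^ i)) (coeff k (seriesComp f g)) := by
  rw [seriesComp, coeff_mk]
  refine (hf.hasSum_coeff.summable.of_nonneg_of_le (fun i => ?_) fun i => ?_).hasSum
  · exact mul_nonneg (hf.coeff_nonneg i) ((hg.pow i).coeff_nonneg k)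
  · exact mul_le_of_le_one_right (hf.coeff_nonneg i) ((hg.pow i).coeff_le_one k)

theorem hasSum_genFun_comp (hf : IsProbSeries f) (hg : IsProbSeries g)
    (ht : t ∈ Set.Icc 0 1) :
    HasSum (fun k => coeff k (seriesComp f g) * t ^ k) (genFun f (genFun g t)) := by
  have row_hasSum (i : ℕ) :
      HasSum (fun k => coeff i f * (coeff k (g ^ i) * t ^ k)) (coeff i f * genFun g t ^ i) := by
    rw [← hg.genFun_pow ((abs_of_nonneg ht.1).trans_le ht.2)]
    exact ((hg.pow i).hasSum_genFun_of_mem_Icc ht).mul_left _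
  have column_hasSum (k : ℕ) : HasSum (fun i => coeff i f * (coeff k (g ^ i) * t ^ k))
      (coeff k (seriesComp f g) * t ^ k) := by
    simpa only [mul_assoc] using (hf.hasSum_coeff_comp hg k).mul_right (t ^ k)
  have rows_hasSum := hf.hasSum_genFun_of_mem_Icc (hg.genFun_mem_Icc ht)
  have double_summable :
      Summable fun x : ℕ × ℕ => coeff x.1 f * (coeff x.2 (g ^ x.1) * t ^ x.2) := by
    refine (summable_prod_of_nonneg fun x => ?_).2 ⟨fun i => (row_hasSum i).summable, ?_⟩
    · exact mul_nonneg (hf.coeff_nonneg _)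
        (mul_nonneg ((hg.pow _).coeff_nonneg _) (pow_nonneg ht.1 _))
    · simpa only [(row_hasSum _).tsum_eq] using rows_hasSum.summable
  rw [rows_hasSum.unique (double_summable.hasSum.prod_fiberwise row_hasSum)]
  exact ((Equiv.prodComm ℕ ℕ).hasSum_iff.2 double_summable.hasSum).prod_fiberwise column_hasSum

theorem genFun_comp (hf : IsProbSeries f) (hg : IsProbSeries g)
    (ht : t ∈ Set.Icc 0 1) : genFun (seriesComp f g) t = genFun f (genFun g t) :=
  (hf.hasSum_genFun_comp hg ht).tsum_eq

theorem comp (hf : IsProbSeries f) (hg : IsProbSeries g) : IsProbSeries (seriesComp f g) where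
  coeff_nonneg k := (hf.hasSum_coeff_comp hg k).nonneg fun i =>
    mul_nonneg (hf.coeff_nonneg i) ((hg.pow i).coeff_nonneg k)
  hasSum_coeff := by
    simpa [hf.genFun_one, hg.genFun_one] using
      hf.hasSum_genFun_comp hg (t := 1) (by simp)

theorem iter (hf : IsProbSeries f) (n : ℕ) : IsProbSeries (seriesIter f n) := by
  induction n with
  | zero => exact hf
  | succ n ih => simpa only [seriesIter_succ] using hf.comp ih

theorem hasFPowerSeriesAt_genFun (hf : IsProbSeries f) :
    HasFPowerSeriesAt (genFun f)
      (FormalMultilinearSeries.ofScalars ℝ fun k => coeff k f) 0 := by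
  rw [hasFPowerSeriesAt_iff]
  filter_upwards [Metric.ball_mem_nhds (0 : ℝ) one_pos] with t ht
  have abs_le_one : |t| ≤ 1 := (mem_ball_zero_iff.1 ht).le
  simpa [mul_comm] using hf.hasSum_genFun abs_le_one

theorem eq_of_eqOn_genFun (hf : IsProbSeries f) (hg : IsProbSeries g)
    (hfg : Set.EqOn (genFun f) (genFun g) (Set.Icc 0 1)) : f = g := by
  have hf' := hf.hasFPowerSeriesAt_genFun
  have hg' := hg.hasFPowerSeriesAt_genFun
  have eventually_eq_right : ∀ᶠ t in 𝓝[>] (0 : ℝ), genFun f t = genFun g t := by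
    filter_upwards [Ioc_mem_nhdsGT one_pos] with t ht using hfg (Set.Ioc_subset_Icc_self ht)
  have frequently_eq : ∃ᶠ t in 𝓝[≠] (0 : ℝ), genFun f t = genFun g t :=
    eventually_eq_right.frequently.filter_mono (nhdsGT_le_nhdsNE 0)
  have eventually_eq :=
    (hf'.analyticAt.frequently_eq_iff_eventually_eq hg'.analyticAt).1 frequently_eq
  ext k
  simpa using congrArg (FormalMultilinearSeries.coeff · k)
    (hf'.eq_formalMultilinearSeries_of_eventually hg' eventually_eq)

theorem seriesComp_assoc (hf : IsProbSeries f) (hg : IsProbSeries g) (hh : IsProbSeries h) :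
    seriesComp (seriesComp f g) h = seriesComp f (seriesComp g h) := by
  refine ((hf.comp hg).comp hh).eq_of_eqOn_genFun (hf.comp (hg.comp hh))
    fun t ht => ?_
  rw [(hf.comp hg).genFun_comp hh ht, hf.genFun_comp hg (hh.genFun_mem_Icc ht),
    hf.genFun_comp (hg.comp hh) ht, hg.genFun_comp hh ht]

theorem seriesIter_succ' (hf : IsProbSeries f) (n : ℕ) :
    seriesIter f (n + 1) = seriesComp (seriesIter f n) f := by
  induction n with
  | zero => rfl
  | succ n ih =>
    rw [seriesIter_succ, ih, ← hf.seriesComp_assoc (hf.iter n) hf, ← seriesIter_succ, ← ih]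

theorem genFun_iter_succ (hf : IsProbSeries f) (n : ℕ) (ht : t ∈ Set.Icc 0 1) :
    genFun (seriesIter f (n + 1)) t = genFun (seriesIter f n) (genFun f t) := by
  rw [hf.seriesIter_succ', (hf.iter n).genFun_comp hf ht]

/-! ### Monotonicity -/

theorem coeff_succ_mul_le (hf : IsProbSeries f) {m : ℝ} (hm : 0 ≤ m)
    (hgm : ∀ k, coeff (k + 1) g ≤ m) (k : ℕ) :
    coeff (k + 1) (f * g) ≤ coeff (k + 1) f * coeff 0 g + m := by
  rw [coeff_mul, Finset.Nat.sum_antidiagonal_succ']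
  gcongr
  calc ∑ x ∈ antidiagonal k, coeff x.1 f * coeff (x.2 + 1) g
      ≤ ∑ x ∈ antidiagonal k, coeff x.1 f * m :=
        Finset.sum_le_sum fun x _ => mul_le_mul_of_nonneg_left (hgm _) (hf.coeff_nonneg _)
    _ = (∑ j ∈ Finset.range (k + 1), coeff j f) * m := by
        rw [← Finset.sum_mul, sum_antidiagonal_fst (fun j => coeff j f)]
    _ ≤ m := mul_le_of_le_one_left hm (hf.sum_coeff_le_one _)

theorem coeff_succ_pow_le_mul_geom_sum (hf : IsProbSeries f) {m : ℝ} (hm : 0 ≤ m)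
    (hfm : ∀ k, coeff (k + 1) f ≤ m) (i k : ℕ) :
    coeff (k + 1) (f ^ i) ≤ m * ∑ l ∈ Finset.range i, coeff 0 f ^ l := by
  induction i with
  | zero => simp [coeff_one]
  | succ i ih =>
    calc coeff (k + 1) (f ^ (i + 1))
        ≤ coeff (k + 1) (f ^ i) * coeff 0 f + m := by
          rw [pow_succ]; exact (hf.pow i).coeff_succ_mul_le hm hfm k
      _ ≤ m * (∑ l ∈ Finset.range i, coeff 0 f ^ l) * coeff 0 f + m := by
          gcongr; exact hf.coeff_nonneg 0
      _ = m * ∑ l ∈ Finset.range (i + 1), coeff 0 f ^ l := by rw [geom_sum_succ]; ring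

theorem coeff_succ_comp_mul_one_sub_le (hf : IsProbSeries f) (hg : IsProbSeries g)
    {m : ℝ} (hm : 0 ≤ m) (hgm : ∀ k, coeff (k + 1) g ≤ m) (k : ℕ) :
    coeff (k + 1) (seriesComp f g) * (1 - coeff 0 g) ≤ m * (1 - genFun f (coeff 0 g)) := by
  refine hasSum_le (fun i => ?_) ((hf.hasSum_coeff_comp hg (k + 1)).mul_right _)
    ((hf.hasSum_coeff.sub (hf.hasSum_genFun_of_mem_Icc (hg.coeff_mem_Icc 0))).mul_left m)
  calc coeff i f * coeff (k + 1) (g ^ i) * (1 - coeff 0 g)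
      ≤ coeff i f * (m * ∑ l ∈ Finset.range i, coeff 0 g ^ l) * (1 - coeff 0 g) := by
        gcongr
        · exact sub_nonneg.2 (hg.coeff_le_one 0)
        · exact hf.coeff_nonneg i
        · exact hg.coeff_succ_pow_le_mul_geom_sum hm hgm i k
    _ = m * (coeff i f - coeff i f * coeff 0 g ^ i) := by
        linear_combination coeff i f * m * geom_sum_mul_neg (coeff 0 g) i

theorem coeff_succ_le_one_sub_coeff_zero (hf : IsProbSeries f) (k : ℕ) :
    coeff (k + 1) f ≤ 1 - coeff 0 f := by
  have := hf.sum_coeff_le_one {0, k + 1}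
  rw [Finset.sum_pair k.succ_ne_zero.symm] at this
  linarith

theorem coeff_succ_comp_le (hf : IsProbSeries f) (hg : IsProbSeries g)
    (hfg : coeff 0 g ≤ genFun f (coeff 0 g)) {m : ℝ} (hm : 0 ≤ m)
    (hgm : ∀ k, coeff (k + 1) g ≤ m) (k : ℕ) : coeff (k + 1) (seriesComp f g) ≤ m := by
  rcases (hg.coeff_le_one 0).eq_or_lt with coeff_eq_one | coeff_lt_one
  · calc coeff (k + 1) (seriesComp f g)
        ≤ 1 - coeff 0 (seriesComp f g) := (hf.comp hg).coeff_succ_le_one_sub_coeff_zero k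
      _ = 0 := by rw [coeff_zero_seriesComp, coeff_eq_one, hf.genFun_one, sub_self]
      _ ≤ m := hm
  · refine le_of_mul_le_mul_right ?_ (sub_pos.2 coeff_lt_one)
    exact (hf.coeff_succ_comp_mul_one_sub_le hg hm hgm k).trans (by gcongr)

theorem coeff_zero_iter_le_genFun (hf : IsProbSeries f) (n : ℕ) :
    coeff 0 (seriesIter f n) ≤ genFun f (coeff 0 (seriesIter f n)) := by
  rw [← coeff_zero_seriesComp, ← seriesIter_succ, hf.seriesIter_succ', coeff_zero_seriesComp,
    ← genFun_zero]
  exact (hf.iter n).genFun_monotoneOn (Set.left_mem_Icc.2 zero_le_one) (hf.coeff_mem_Icc 0)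
    (hf.coeff_nonneg 0)

theorem antitone_iSup_coeff_succ_iter (hf : IsProbSeries f) :
    Antitone fun n => ⨆ k, coeff (k + 1) (seriesIter f n) := by
  refine antitone_nat_of_succ_le fun n => ciSup_le fun k => ?_
  rw [seriesIter_succ]
  exact hf.coeff_succ_comp_le (hf.iter n) (hf.coeff_zero_iter_le_genFun n)
    (Real.iSup_nonneg fun j => (hf.iter n).coeff_nonneg (j + 1))
    (le_ciSup ((hf.iter n).bddAbove_range_coeff Nat.succ)) k

/-! ### Coefficients of powers -/

-- The part `w · 1_T` of `f` contributes at most `w`, because the coefficients of `g` sum to `1`;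
-- the remainder of `f` has total mass `1 - |T| w` and contributes at most that multiple of `B`.
theorem coeff_mul_le (hf : IsProbSeries f) (hg : IsProbSeries g) {T : Finset ℕ} {w B : ℝ}
    (hw : 0 ≤ w) (hfw : ∀ j ∈ T, w ≤ coeff j f) (hgB : ∀ j, coeff j g ≤ B) (k : ℕ) :
    coeff k (f * g) ≤ w + (1 - T.card * w) * B := by
  let uniform : ℕ → ℝ := fun j => if j ∈ T then w else 0
  have uniform_le (j : ℕ) : uniform j ≤ w := by dsimp only [uniform]; split_ifs <;> simp [hw]
  have rest_nonneg (j : ℕ) : 0 ≤ coeff j f - uniform j := by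
    dsimp only [uniform]
    split_ifs with hj
    · exact sub_nonneg.2 (hfw j hj)
    · simpa using hf.coeff_nonneg j
  have uniform_hasSum : HasSum uniform (T.card * w) := by
    simpa [uniform] using hasSum_sum_of_ne_finset_zero (f := uniform) (s := T)
      fun j hj => if_neg hj
  have hB : 0 ≤ B := (hg.coeff_nonneg 0).trans (hgB 0)
  calc coeff k (f * g)
      = ∑ x ∈ antidiagonal k,
          (uniform x.1 * coeff x.2 g + (coeff x.1 f - uniform x.1) * coeff x.2 g) := by
        rw [coeff_mul]
        exact Finset.sum_congr rfl fun x _ => by ring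
    _ ≤ ∑ x ∈ antidiagonal k, (w * coeff x.2 g + (coeff x.1 f - uniform x.1) * B) := by
        gcongr with x
        · exact hg.coeff_nonneg x.2
        · exact uniform_le x.1
        · exact rest_nonneg x.1
        · exact hgB x.2
    _ = w * ∑ j ∈ Finset.range (k + 1), coeff j g +
          (∑ j ∈ Finset.range (k + 1), (coeff j f - uniform j)) * B := by
        rw [Finset.sum_add_distrib, ← Finset.mul_sum, ← Finset.sum_mul,
          sum_antidiagonal_snd (fun j => coeff j g),
          sum_antidiagonal_fst (fun j => coeff j f - uniform j)]
    _ ≤ w * 1 + (1 - T.card * w) * B := by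
        gcongr
        · exact hg.sum_coeff_le_one _
        · exact sum_le_hasSum _ (fun j _ => rest_nonneg j) (hf.hasSum_coeff.sub uniform_hasSum)
    _ = w + (1 - T.card * w) * B := by rw [mul_one]

theorem coeff_add_mul_pos (hf : IsProbSeries f) (hg : IsProbSeries g) {i j : ℕ}
    (hi : 0 < coeff i f) (hj : 0 < coeff j g) : 0 < coeff (i + j) (f * g) := by
  rw [coeff_mul]
  exact Finset.sum_pos' (fun x _ => mul_nonneg (hf.coeff_nonneg _) (hg.coeff_nonneg _))
    ⟨(i, j), mem_antidiagonal.2 rfl, mul_pos hi hj⟩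

theorem exists_coeff_pos (hf : IsProbSeries f) : ∃ k, 0 < coeff k f := by
  by_contra! coeff_nonpos
  have coeff_eq_zero (k : ℕ) : coeff k f = 0 := (coeff_nonpos k).antisymm (hf.coeff_nonneg k)
  exact zero_ne_one (hasSum_zero.unique (by simpa only [coeff_eq_zero] using hf.hasSum_coeff))

theorem exists_pair_coeff_pos (hf : IsProbSeries f) (hf1 : ∀ k, coeff k f < 1) :
    ∃ u v, u ≠ v ∧ 0 < coeff u f ∧ 0 < coeff v f := by
  obtain ⟨u, hu⟩ := hf.exists_coeff_pos
  by_contra! coeff_nonpos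
  have hasSum_coeff_u : HasSum (fun k => coeff k f) (coeff u f) := hasSum_single u fun v hv =>
    (coeff_nonpos u v hv.symm hu).antisymm (hf.coeff_nonneg v)
  exact (hf1 u).ne (hasSum_coeff_u.unique hf.hasSum_coeff)

open scoped Pointwise in
theorem exists_card_gt_coeff_pow_pos (hf : IsProbSeries f) (hf1 : ∀ k, coeff k f < 1) (n : ℕ) :
    ∃ T : Finset ℕ, n < T.card ∧ ∀ j ∈ T, 0 < coeff j (f ^ n) := by
  obtain ⟨u, v, huv, hu, hv⟩ := hf.exists_pair_coeff_pos hf1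
  induction n with
  | zero => exact ⟨{0}, by simp⟩
  | succ n ih =>
    obtain ⟨T, n_lt_card, coeff_pos⟩ := ih
    have T_nonempty : T.Nonempty := Finset.card_pos.1 (n.zero_le.trans_lt n_lt_card)
    refine ⟨T + {u, v}, ?_, fun j hj => ?_⟩
    · have := cauchy_davenport_add_of_linearOrder_isCancelAdd T_nonempty
        (Finset.insert_nonempty u {v})
      rw [Finset.card_pair huv] at this
      omega
    · obtain ⟨i, hi, l, hl, rfl⟩ := Finset.mem_add.1 hj
      have coeff_l_pos : 0 < coeff l f := by
        rcases Finset.mem_insert.1 hl with rfl | hl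
        · exact hu
        · rwa [Finset.mem_singleton.1 hl]
      rw [pow_succ]
      exact (hf.pow n).coeff_add_mul_pos hf (coeff_pos i hi) coeff_l_pos

theorem iSup_coeff_pow_add_le (hf : IsProbSeries f) {n : ℕ} {T : Finset ℕ} {w : ℝ} (hw : 0 ≤ w)
    (hfw : ∀ j ∈ T, w ≤ coeff j (f ^ n)) (i : ℕ) :
    ⨆ k, coeff k (f ^ (i + n)) ≤ w + (1 - T.card * w) * ⨆ k, coeff k (f ^ i) := by
  refine ciSup_le fun k => ?_
  rw [add_comm, pow_add]
  exact (hf.pow n).coeff_mul_le (hf.pow i) hw hfw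
    (le_ciSup ((hf.pow i).bddAbove_range_coeff id)) k

theorem antitone_iSup_coeff_pow (hf : IsProbSeries f) :
    Antitone fun i => ⨆ k, coeff k (f ^ i) :=
  antitone_nat_of_succ_le fun i => by
    simpa using hf.iSup_coeff_pow_add_le (n := 1) (T := ∅) le_rfl (by simp) i

theorem nat_mul_le_one_of_tendsto_iSup_coeff_pow (hf : IsProbSeries f)
    (hf1 : ∀ k, coeff k f < 1) {L : ℝ}
    (hL : Tendsto (fun i => ⨆ k, coeff k (f ^ i)) atTop (𝓝 L)) (n : ℕ) : n * L ≤ 1 := by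
  obtain ⟨T, n_lt_card, coeff_pos⟩ := hf.exists_card_gt_coeff_pow_pos hf1 n
  have T_nonempty : T.Nonempty := Finset.card_pos.1 (n.zero_le.trans_lt n_lt_card)
  obtain ⟨j, hj, coeff_j_le⟩ := T.exists_min_image (fun j => coeff j (f ^ n)) T_nonempty
  set w := coeff j (f ^ n)
  have w_pos : 0 < w := coeff_pos j hj
  have L_nonneg : 0 ≤ L := ge_of_tendsto' hL fun i => Real.iSup_nonneg (hf.pow i).coeff_nonneg
  have L_le : L ≤ w + (1 - T.card * w) * L :=
    le_of_tendsto_of_tendsto' ((tendsto_add_atTop_iff_nat n).2 hL)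
      ((hL.const_mul _).const_add w) (hf.iSup_coeff_pow_add_le w_pos.le coeff_j_le)
  calc n * L ≤ T.card * L := by gcongr
    _ ≤ 1 := le_of_mul_le_mul_left (by linarith) w_pos

theorem tendsto_iSup_coeff_pow (hf : IsProbSeries f) (hf1 : ∀ k, coeff k f < 1) :
    Tendsto (fun i => ⨆ k, coeff k (f ^ i)) atTop (𝓝 0) := by
  have iSup_nonneg (i : ℕ) : 0 ≤ ⨆ k, coeff k (f ^ i) := Real.iSup_nonneg (hf.pow i).coeff_nonneg
  have tendsto_iInf := tendsto_atTop_ciInf hf.antitone_iSup_coeff_pow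
    ⟨0, Set.forall_mem_range.2 iSup_nonneg⟩
  set L := ⨅ i, ⨆ k, coeff k (f ^ i)
  have L_nonpos : L ≤ 0 := by
    by_contra! L_pos
    obtain ⟨n, hn⟩ := exists_nat_gt (1 / L)
    exact ((div_lt_iff₀ L_pos).1 hn).not_ge
      (hf.nat_mul_le_one_of_tendsto_iSup_coeff_pow hf1 tendsto_iInf n)
  rwa [L_nonpos.antisymm (le_ciInf iSup_nonneg)] at tendsto_iInf

/-! ### Coefficients of iterates -/

theorem exists_genFun_ne_self (hf : IsProbSeries f) (hf1 : coeff 1 f ≠ 1) :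
    ∃ t ∈ Set.Icc 0 1, genFun f t ≠ t := by
  by_contra! genFun_eq_self
  have f_eq_X : f = X := hf.eq_of_eqOn_genFun isProbSeries_X fun t ht => by
    rw [genFun_eq_self t ht, genFun_X]
  exact hf1 (by rw [f_eq_X, coeff_one_X])

theorem coeff_mul_abs_pow_sub_pow_le (hf : IsProbSeries f) {s : ℝ} (hs : s ∈ Set.Icc 0 1)
    (ht : t ∈ Set.Icc 0 1) (k : ℕ) :
    coeff k f * |s ^ k - t ^ k| ≤ |genFun f s - genFun f t| := by
  wlog hts : t ≤ s generalizing s t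
  · simpa only [abs_sub_comm] using this ht hs (le_of_not_ge hts)
  have pow_le (j : ℕ) : t ^ j ≤ s ^ j := pow_le_pow_left₀ ht.1 hts j
  have hasSum_sub := (hf.hasSum_genFun_of_mem_Icc hs).sub (hf.hasSum_genFun_of_mem_Icc ht)
  simp only [← mul_sub] at hasSum_sub
  rw [abs_of_nonneg (sub_nonneg.2 (pow_le k))]
  exact (le_hasSum hasSum_sub k fun j _ =>
    mul_nonneg (hf.coeff_nonneg j) (sub_nonneg.2 (pow_le j))).trans (le_abs_self _)

theorem exists_tendsto_genFun_iter (hf : IsProbSeries f) (ht : t ∈ Set.Icc 0 1) :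
    ∃ l, Tendsto (fun n => genFun (seriesIter f n) t) atTop (𝓝 l) := by
  have mem_Icc (n : ℕ) := (hf.iter n).genFun_mem_Icc ht
  rcases le_total t (genFun f t) with t_le | le_t
  · refine ⟨_, tendsto_atTop_ciSup (monotone_nat_of_le_succ fun n => ?_)
      ⟨1, Set.forall_mem_range.2 fun n => (mem_Icc n).2⟩⟩
    rw [hf.genFun_iter_succ n ht]
    exact (hf.iter n).genFun_monotoneOn ht (hf.genFun_mem_Icc ht) t_le
  · refine ⟨_, tendsto_atTop_ciInf (antitone_nat_of_succ_le fun n => ?_)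
      ⟨0, Set.forall_mem_range.2 fun n => (mem_Icc n).1⟩⟩
    rw [hf.genFun_iter_succ n ht]
    exact (hf.iter n).genFun_monotoneOn (hf.genFun_mem_Icc ht) ht le_t

theorem tendsto_coeff_iter (hf : IsProbSeries f) (hf1 : coeff 1 f ≠ 1) {k : ℕ} (hk : k ≠ 0) :
    Tendsto (fun n => coeff k (seriesIter f n)) atTop (𝓝 0) := by
  obtain ⟨t, ht, genFun_ne⟩ := hf.exists_genFun_ne_self hf1
  have abs_pow_sub_pow_pos : 0 < |genFun f t ^ k - t ^ k| := by
    rw [abs_pos, sub_ne_zero]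
    exact fun pow_eq => genFun_ne ((pow_left_inj₀ (hf.genFun_mem_Icc ht).1 ht.1 hk).1 pow_eq)
  obtain ⟨l, hl⟩ := hf.exists_tendsto_genFun_iter ht
  have increment_tendsto :
      Tendsto (fun n => |genFun (seriesIter f n) (genFun f t) - genFun (seriesIter f n) t| /
        |genFun f t ^ k - t ^ k|) atTop (𝓝 0) := by
    simpa [hf.genFun_iter_succ _ ht] using
      (tendsto_succ_sub_self_of_tendsto hl).abs.div_const |genFun f t ^ k - t ^ k|
  refine squeeze_zero (fun n => (hf.iter n).coeff_nonneg k) (fun n => ?_) increment_tendsto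
  rw [le_div_iff₀ abs_pow_sub_pow_pos]
  exact (hf.iter n).coeff_mul_abs_pow_sub_pow_le (hf.genFun_mem_Icc ht) ht k

theorem coeff_succ_comp_le_sum_add (hf : IsProbSeries f) (hg : IsProbSeries g) {I : ℕ} {ε : ℝ}
    (hε : 0 ≤ ε) (hgε : ∀ i ≥ I, ∀ k, coeff k (g ^ i) ≤ ε) (k : ℕ) :
    coeff (k + 1) (seriesComp f g) ≤ ∑ i ∈ Finset.Ico 1 I, coeff i f + ε := by
  have hasSum_head : HasSum (fun i => if i ∈ Finset.Ico 1 I then coeff i f else 0)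
      (∑ i ∈ Finset.Ico 1 I, coeff i f) := by
    rw [← Finset.sum_congr rfl fun i hi => if_pos hi]
    exact hasSum_sum_of_ne_finset_zero fun i hi => if_neg hi
  have hasSum_tail : HasSum (fun i => coeff i f * ε) ε := by
    simpa using hf.hasSum_coeff.mul_right ε
  refine hasSum_le (fun i => ?_) (hf.hasSum_coeff_comp hg (k + 1)) (hasSum_head.add hasSum_tail)
  have tail_nonneg : 0 ≤ coeff i f * ε := mul_nonneg (hf.coeff_nonneg i) hε
  rcases Nat.eq_zero_or_pos i with rfl | i_pos
  · simpa [coeff_one] using tail_nonneg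
  rcases lt_or_ge i I with i_lt | i_ge
  · rw [if_pos (Finset.mem_Ico.2 ⟨i_pos, i_lt⟩)]
    exact le_add_of_le_of_nonneg
      (mul_le_of_le_one_right (hf.coeff_nonneg i) ((hg.pow i).coeff_le_one _)) tail_nonneg
  · rw [if_neg fun hi => i_ge.not_gt (Finset.mem_Ico.1 hi).2, zero_add]
    exact mul_le_mul_of_nonneg_left (hgε i i_ge _) (hf.coeff_nonneg i)

theorem tendsto_iSup_coeff_succ_iter (hf : IsProbSeries f) (hf1 : ∀ k, coeff k f < 1) :
    Tendsto (fun n => ⨆ k, coeff (k + 1) (seriesIter f n)) atTop (𝓝 0) := by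
  rw [← tendsto_add_atTop_iff_nat 1]
  refine tendsto_order.2 ⟨fun c hc => .of_forall fun n => hc.trans_le ?_, fun ε hε => ?_⟩
  · exact Real.iSup_nonneg fun k => (hf.iter (n + 1)).coeff_nonneg (k + 1)
  obtain ⟨I, iSup_lt⟩ := eventually_atTop.1
    ((hf.tendsto_iSup_coeff_pow hf1).eventually_lt_const (half_pos hε))
  have coeff_pow_le : ∀ i ≥ I, ∀ k, coeff k (f ^ i) ≤ ε / 2 := fun i hi k =>
    (le_ciSup ((hf.pow i).bddAbove_range_coeff id) k).trans (iSup_lt i hi).le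
  have head_tendsto :
      Tendsto (fun n => ∑ i ∈ Finset.Ico 1 I, coeff i (seriesIter f n)) atTop (𝓝 0) := by
    simpa using tendsto_finsetSum (Finset.Ico 1 I) fun i hi =>
      hf.tendsto_coeff_iter (hf1 1).ne (Nat.one_le_iff_ne_zero.1 (Finset.mem_Ico.1 hi).1)
  filter_upwards [head_tendsto.eventually_lt_const (half_pos hε)] with n head_lt
  rw [hf.seriesIter_succ']
  calc ⨆ k, coeff (k + 1) (seriesComp (seriesIter f n) f)
      ≤ ∑ i ∈ Finset.Ico 1 I, coeff i (seriesIter f n) + ε / 2 :=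
        ciSup_le ((hf.iter n).coeff_succ_comp_le_sum_add hf (half_pos hε).le coeff_pow_le)
    _ < ε := by linarith

end IsProbSeries

/-- For `p(t) = Σ a_k t^k` with `0 ≤ a_k < 1` and `Σ a_k = 1`, the suprema
`a^[n] = sup_{k≥1} a_k^[n]` of positive-degree coefficients of the iterates form a
monotone decreasing sequence tending to `0`. -/
theorem stmt14 (a : ℕ → ℝ) (ha0 : ∀ k, 0 ≤ a k) (ha1 : ∀ k, a k < 1)
    (hsum : HasSum a 1) :
    Antitone (fun n => ⨆ k : ℕ, iterCoeff a n (k + 1)) ∧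
    Tendsto (fun n => ⨆ k : ℕ, iterCoeff a n (k + 1)) atTop (nhds 0) := by
  have iterCoeff_eq (n k : ℕ) : iterCoeff a n k = coeff k (seriesIter (mk a) n) := by
    rw [← mk_iterCoeff, coeff_mk]
  have ha : IsProbSeries (mk a) := ⟨by simpa using ha0, by simpa using hsum⟩
  simp only [iterCoeff_eq]
  exact ⟨ha.antitone_iSup_coeff_succ_iter, ha.tendsto_iSup_coeff_succ_iter (by simpa using ha1)⟩
end

section
/- Let p(t) = Σ_{k≥0} a_k t^k be a power series with |a_k| < 1 for all k and Σ |a_k| ≤ 1, with iterates p^[n] having coefficients a_k^[n]. If the constant terms a₀^[n] converge to a, then for every t ∈ (-1,1), p^[n](t) → a as n → ∞. -/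
open Filter Topology

/-!
Write `p` for the series and `‖a‖₁` for the sum of the norms of its coefficients. Since `‖a‖₁ ≤ 1`,
a Schwarz–Pick type estimate holds: `‖x - c‖ ≤ s (1 - ‖c‖)` implies `‖p x - p c‖ ≤ s (1 - ‖p c‖)`
for `0 ≤ s ≤ 1`. Termwise this is the convexity of `u ↦ u ^ k` on `[‖c‖, 1]`, and it is strict for
`0 < s < 1` and `‖c‖ < 1` as soon as some `a k` with `k ≥ 2` is nonzero. So the ratio
`‖x - c‖ / (1 - ‖c‖)` never increases along the orbits of `t` and `0`, and starts at `‖t‖ < 1`.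
Its limit `σ` is attained at every limit point `(ξ, γ)` of the pair of orbits and at the image of
that point, and strictness leaves only `σ = 0` or `‖γ‖ = 1`; in both cases `ξ = γ`. Hence the orbits
of `t` and `0` merge. If instead `a k = 0` for all `k ≥ 2`, then `p` is affine with slope `a 1`, of
norm less than one. Composing coefficient sequences with `‖·‖₁ ≤ 1` composes the functions, so the
orbit of `0` consists of the constant terms.
-/

/-- The sum `∑ a k * x ^ k` of the power series with coefficients `a`, with the junk value `0`
where the series does not converge. -/
noncomputable def seriesEval {R : Type*} [NormedRing R] (a : ℕ → R) (x : R) : R :=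
  ∑' k, a k * x ^ k

/-- The coefficient sequence `a` lies in the closed unit ball of `ℓ¹`. -/
structure NormSumLeOne {R : Type*} [NormedRing R] (a : ℕ → R) : Prop where
  summable_norm : Summable fun k => ‖a k‖
  tsum_norm_le : ∑' k, ‖a k‖ ≤ 1

theorem norm_mul_pow_le {R : Type*} [NormedRing R] [NormOneClass R] (r : R) {x : R} (hx : ‖x‖ ≤ 1)
    (k : ℕ) : ‖r * x ^ k‖ ≤ ‖r‖ :=
  calc ‖r * x ^ k‖ ≤ ‖r‖ * ‖x‖ ^ k :=
        (norm_mul_le _ _).trans (mul_le_mul_of_nonneg_left (norm_pow_le x k) (norm_nonneg r))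
    _ ≤ ‖r‖ := mul_le_of_le_one_right (norm_nonneg r) (pow_le_one₀ (norm_nonneg x) hx)

theorem seriesEval_zero {R : Type*} [NormedRing R] (a : ℕ → R) : seriesEval a 0 = a 0 := by
  rw [seriesEval, tsum_eq_single 0 fun k hk => by rw [zero_pow hk, mul_zero], pow_zero, mul_one]

theorem seriesEval_eq_add_of_forall_two_le {R : Type*} [NormedRing R] {a : ℕ → R}
    (ha : ∀ k, 2 ≤ k → a k = 0) (x : R) : seriesEval a x = a 0 + a 1 * x := by
  have h : ∀ k ∉ Finset.range 2, a k * x ^ k = 0 := fun k hk => by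
    rw [ha k (not_lt.1 (mt Finset.mem_range.2 hk)), zero_mul]
  rw [seriesEval, tsum_eq_sum h, Finset.sum_range_succ, Finset.sum_range_one, pow_zero, pow_one,
    mul_one]

namespace NormSumLeOne

section Eval

variable {R : Type*} [NormedRing R] [NormOneClass R] {a : ℕ → R} {x : R}

theorem summable_norm_mul_pow (ha : NormSumLeOne a) (hx : ‖x‖ ≤ 1) :
    Summable fun k => ‖a k * x ^ k‖ :=
  ha.summable_norm.of_nonneg_of_le (fun _ => norm_nonneg _) fun k => norm_mul_pow_le (a k) hx k

theorem summable_mul_pow [CompleteSpace R] (ha : NormSumLeOne a) (hx : ‖x‖ ≤ 1) :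
    Summable fun k => a k * x ^ k :=
  (ha.summable_norm_mul_pow hx).of_norm

theorem continuousOn_seriesEval [CompleteSpace R] (ha : NormSumLeOne a) :
    ContinuousOn (seriesEval a) (Metric.closedBall 0 1) :=
  continuousOn_tsum (fun k => by fun_prop) ha.summable_norm fun k _ hx =>
    norm_mul_pow_le (a k) (mem_closedBall_zero_iff.1 hx) k

end Eval

section Mixture

variable {R : Type*} [NormedRing R] {a : ℕ → R} {b : ℕ → ℕ → R}

theorem tsum_mul_norm_le (ha : NormSumLeOne a) {r : ℝ} (hr : 0 ≤ r) :
    ∑' k, r * ‖a k‖ ≤ r := by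
  rw [tsum_mul_left]
  exact mul_le_of_le_one_right hr ha.tsum_norm_le

theorem summable_norm_mul_prod (ha : NormSumLeOne a) (hb : ∀ i, NormSumLeOne (b i)) :
    Summable fun p : ℕ × ℕ => ‖a p.1‖ * ‖b p.1 p.2‖ := by
  rw [summable_prod_of_nonneg fun _ => by positivity]
  refine ⟨fun i => (hb i).summable_norm.mul_left ‖a i‖, ?_⟩
  exact ha.summable_norm.of_nonneg_of_le (fun i => tsum_nonneg fun k => by positivity) fun i =>
    (hb i).tsum_mul_norm_le (norm_nonneg (a i))

theorem tsum_mul (ha : NormSumLeOne a) (hb : ∀ i, NormSumLeOne (b i)) :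
    NormSumLeOne fun k => ∑' i, a i * b i k := by
  have hprod := ha.summable_norm_mul_prod hb
  have hprod' : Summable fun p : ℕ × ℕ => ‖a p.2‖ * ‖b p.2 p.1‖ := hprod.prod_symm
  have hcolumn (k : ℕ) : Summable fun i => ‖a i‖ * ‖b i k‖ := hprod'.prod_factor k
  have hle (k : ℕ) : ‖∑' i, a i * b i k‖ ≤ ∑' i, ‖a i‖ * ‖b i k‖ :=
    tsum_of_norm_bounded (hcolumn k).hasSum fun i => norm_mul_le _ _
  have hsummable : Summable fun k => ‖∑' i, a i * b i k‖ :=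
    hprod'.prod.of_nonneg_of_le (fun _ => norm_nonneg _) hle
  refine ⟨hsummable, ?_⟩
  calc ∑' k, ‖∑' i, a i * b i k‖ ≤ ∑' k, ∑' i, ‖a i‖ * ‖b i k‖ :=
        hsummable.tsum_le_tsum hle hprod'.prod
    _ = ∑' i, ∑' k, ‖a i‖ * ‖b i k‖ := hprod.tsum_comm (f := fun i k => ‖a i‖ * ‖b i k‖)
    _ ≤ ∑' i, ‖a i‖ := hprod.prod.tsum_le_tsum
        (fun i => (hb i).tsum_mul_norm_le (norm_nonneg (a i))) ha.summable_norm
    _ ≤ 1 := ha.tsum_norm_le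

theorem seriesEval_tsum_mul [NormOneClass R] [CompleteSpace R] (ha : NormSumLeOne a)
    (hb : ∀ i, NormSumLeOne (b i)) {x : R} (hx : ‖x‖ ≤ 1) :
    seriesEval (fun k => ∑' i, a i * b i k) x = ∑' i, a i * seriesEval (b i) x := by
  have hprod := ha.summable_norm_mul_prod hb
  have hprod' : Summable fun p : ℕ × ℕ => ‖a p.2‖ * ‖b p.2 p.1‖ := hprod.prod_symm
  have hcolumn (k : ℕ) : Summable fun i => a i * b i k :=
    .of_norm_bounded (hprod'.prod_factor k) fun i => norm_mul_le _ _
  have hterm : Summable fun p : ℕ × ℕ => a p.1 * b p.1 p.2 * x ^ p.2 :=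
    .of_norm_bounded hprod fun p => (norm_mul_pow_le _ hx _).trans (norm_mul_le _ _)
  calc ∑' k, (∑' i, a i * b i k) * x ^ k
      = ∑' k, ∑' i, a i * b i k * x ^ k := tsum_congr fun k => ((hcolumn k).tsum_mul_right _).symm
    _ = ∑' i, ∑' k, a i * b i k * x ^ k := hterm.tsum_comm (f := fun i k => a i * b i k * x ^ k)
    _ = ∑' i, a i * ∑' k, b i k * x ^ k := tsum_congr fun i => by
        simp_rw [mul_assoc, ((hb i).summable_mul_pow hx).tsum_mul_left]

end Mixture

section Power

variable {R : Type*} [NormedCommRing R]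

theorem coeff_one [NormOneClass R] : NormSumLeOne fun k => (1 : PowerSeries R).coeff k := by
  have h : HasSum (fun k => ‖(1 : PowerSeries R).coeff k‖) 1 := by
    convert hasSum_ite_eq (0 : ℕ) (1 : ℝ) using 2 with k
    rw [PowerSeries.coeff_one]
    split_ifs <;> simp
  exact ⟨h.summable, h.tsum_eq.le⟩

theorem coeff_mul {f g : PowerSeries R} (hf : NormSumLeOne fun k => f.coeff k)
    (hg : NormSumLeOne fun k => g.coeff k) : NormSumLeOne fun k => (f * g).coeff k := by
  have hsummable : Summable fun k => ‖(f * g).coeff k‖ := by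
    simp_rw [PowerSeries.coeff_mul]
    exact summable_norm_sum_mul_antidiagonal_of_summable_norm (f := fun k => f.coeff k)
      (g := fun k => g.coeff k) hf.summable_norm hg.summable_norm
  have hle (k : ℕ) : ‖(f * g).coeff k‖ ≤
      ∑ p ∈ Finset.HasAntidiagonal.antidiagonal k, ‖f.coeff p.1‖ * ‖g.coeff p.2‖ := by
    rw [PowerSeries.coeff_mul]
    exact norm_sum_le_of_le _ fun p _ => norm_mul_le _ _
  refine ⟨hsummable, ?_⟩
  calc ∑' k, ‖(f * g).coeff k‖
      ≤ ∑' k, ∑ p ∈ Finset.HasAntidiagonal.antidiagonal k, ‖f.coeff p.1‖ * ‖g.coeff p.2‖ :=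
        hsummable.tsum_le_tsum hle <| (summable_norm_sum_mul_antidiagonal_of_summable_norm
          hf.summable_norm.norm hg.summable_norm.norm).of_norm
    _ = (∑' k, ‖f.coeff k‖) * ∑' k, ‖g.coeff k‖ :=
        (tsum_mul_tsum_eq_tsum_sum_antidiagonal_of_summable_norm
          hf.summable_norm.norm hg.summable_norm.norm).symm
    _ ≤ 1 := mul_le_one₀ hf.tsum_norm_le (tsum_nonneg fun _ => norm_nonneg _) hg.tsum_norm_le

variable [NormOneClass R]

theorem coeff_pow {f : PowerSeries R} (hf : NormSumLeOne fun k => f.coeff k) (i : ℕ) :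
    NormSumLeOne fun k => (f ^ i).coeff k := by
  induction i with
  | zero => simpa only [pow_zero] using coeff_one
  | succ i ih => simpa only [pow_succ] using ih.coeff_mul hf

variable [CompleteSpace R] {x : R}

theorem seriesEval_coeff_mul {f g : PowerSeries R} (hf : NormSumLeOne fun k => f.coeff k)
    (hg : NormSumLeOne fun k => g.coeff k) (hx : ‖x‖ ≤ 1) :
    seriesEval (fun k => (f * g).coeff k) x =
      seriesEval (fun k => f.coeff k) x * seriesEval (fun k => g.coeff k) x := by
  simp only [seriesEval]
  rw [tsum_mul_tsum_eq_tsum_sum_antidiagonal_of_summable_norm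
    (hf.summable_norm_mul_pow hx) (hg.summable_norm_mul_pow hx)]
  refine tsum_congr fun k => ?_
  rw [PowerSeries.coeff_mul, Finset.sum_mul]
  refine Finset.sum_congr rfl fun p hp => ?_
  rw [← Finset.HasAntidiagonal.mem_antidiagonal.1 hp, pow_add, mul_mul_mul_comm]

theorem seriesEval_coeff_pow {f : PowerSeries R} (hf : NormSumLeOne fun k => f.coeff k)
    (hx : ‖x‖ ≤ 1) (i : ℕ) :
    seriesEval (fun k => (f ^ i).coeff k) x = seriesEval (fun k => f.coeff k) x ^ i := by
  induction i with
  | zero =>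
    rw [pow_zero, pow_zero, seriesEval, tsum_eq_single 0 fun k hk => by
      rw [PowerSeries.coeff_one, if_neg hk, zero_mul]]
    simp
  | succ i ih => rw [pow_succ, (hf.coeff_pow i).seriesEval_coeff_mul hf hx, ih, pow_succ]

end Power

end NormSumLeOne

section Composition

theorem coeff_mk_pow_eq_sum_antidiagonalTuple {R : Type*} [CommSemiring R] (b : ℕ → R) (i k : ℕ) :
    (PowerSeries.mk b ^ i).coeff k =
      ∑ f ∈ Finset.Nat.antidiagonalTuple i k, ∏ l, b (f l) := by
  have hpow : PowerSeries.mk b ^ i = ∏ _l : Fin i, PowerSeries.mk b := by simp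
  rw [hpow, PowerSeries.coeff_prod]
  refine Finset.sum_equiv Finsupp.equivFunOnFinite (fun f => ?_) fun f _ => ?_
  · simp [Finset.Nat.mem_antidiagonalTuple]
  · simp

theorem compCoeff_eq_tsum_coeff_pow (a b : ℕ → ℝ) :
    compCoeff a b = fun k => ∑' i, a i * (PowerSeries.mk b ^ i).coeff k := by
  funext k
  simp_rw [compCoeff, coeff_mk_pow_eq_sum_antidiagonalTuple]

variable {a b : ℕ → ℝ}

theorem NormSumLeOne.coeff_mk_pow (hb : NormSumLeOne b) (i : ℕ) :
    NormSumLeOne fun k => (PowerSeries.mk b ^ i).coeff k :=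
  coeff_pow (by simpa only [PowerSeries.coeff_mk] using hb) i

theorem NormSumLeOne.compCoeff (ha : NormSumLeOne a) (hb : NormSumLeOne b) :
    NormSumLeOne (compCoeff a b) := by
  rw [compCoeff_eq_tsum_coeff_pow]
  exact ha.tsum_mul hb.coeff_mk_pow

theorem seriesEval_compCoeff (ha : NormSumLeOne a) (hb : NormSumLeOne b) {x : ℝ} (hx : ‖x‖ ≤ 1) :
    seriesEval (compCoeff a b) x = seriesEval a (seriesEval b x) := by
  have hpow (i : ℕ) :
      seriesEval (fun k => (PowerSeries.mk b ^ i).coeff k) x = seriesEval b x ^ i := by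
    simpa only [PowerSeries.coeff_mk] using NormSumLeOne.seriesEval_coeff_pow
      (f := PowerSeries.mk b) (by simpa only [PowerSeries.coeff_mk] using hb) hx i
  rw [compCoeff_eq_tsum_coeff_pow, ha.seriesEval_tsum_mul hb.coeff_mk_pow hx]
  simp_rw [hpow, seriesEval]

theorem NormSumLeOne.iterCoeff (ha : NormSumLeOne a) (n : ℕ) : NormSumLeOne (iterCoeff a n) := by
  induction n with
  | zero => exact ha
  | succ n ih => exact ha.compCoeff ih

theorem seriesEval_iterCoeff (ha : NormSumLeOne a) (n : ℕ) {x : ℝ} (hx : ‖x‖ ≤ 1) :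
    seriesEval (iterCoeff a n) x = (seriesEval a)^[n + 1] x := by
  induction n with
  | zero => rfl
  | succ n ih =>
    rw [Function.iterate_succ_apply', ← ih]
    exact seriesEval_compCoeff ha (ha.iterCoeff n) hx

end Composition

section SchwarzPick

variable {R : Type*} [NormedRing R] [NormOneClass R] {x c : R} {s : ℝ}

theorem norm_pow_sub_pow_le (x c : R) (k : ℕ) :
    ‖x ^ k - c ^ k‖ ≤ (‖c‖ + ‖x - c‖) ^ k - ‖c‖ ^ k := by
  induction k with
  | zero => simp
  | succ k ih =>
    calc ‖x ^ (k + 1) - c ^ (k + 1)‖ = ‖x * (x ^ k - c ^ k) + (x - c) * c ^ k‖ := by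
          rw [pow_succ', pow_succ', mul_sub, sub_mul, sub_add_sub_cancel]
      _ ≤ ‖x‖ * ‖x ^ k - c ^ k‖ + ‖x - c‖ * ‖c‖ ^ k := by
          refine norm_add_le_of_le (norm_mul_le _ _) ((norm_mul_le _ _).trans ?_)
          gcongr
          exact norm_pow_le c k
      _ ≤ (‖c‖ + ‖x - c‖) * ((‖c‖ + ‖x - c‖) ^ k - ‖c‖ ^ k) + ‖x - c‖ * ‖c‖ ^ k := by
          gcongr
          exact norm_le_norm_add_norm_sub' x c
      _ = (‖c‖ + ‖x - c‖) ^ (k + 1) - ‖c‖ ^ (k + 1) := by ring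

theorem norm_le_one_of_norm_sub_le {E : Type*} [NormedAddCommGroup E] {x c : E} {s : ℝ}
    (hs : s ≤ 1) (hc : ‖c‖ ≤ 1) (h : ‖x - c‖ ≤ s * (1 - ‖c‖)) : ‖x‖ ≤ 1 := by
  have := mul_le_of_le_one_left (sub_nonneg.2 hc) hs
  linarith [norm_le_norm_add_norm_sub' x c]

theorem norm_pow_sub_pow_le_convexComb (h : ‖x - c‖ ≤ s * (1 - ‖c‖)) (k : ℕ) :
    ‖x ^ k - c ^ k‖ ≤ ((1 - s) * ‖c‖ + s * 1) ^ k - ‖c‖ ^ k := by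
  have hbase : ‖c‖ + ‖x - c‖ ≤ (1 - s) * ‖c‖ + s * 1 := by linarith
  refine (norm_pow_sub_pow_le x c k).trans ?_
  gcongr

theorem norm_pow_sub_pow_le_mul_one_sub (hs0 : 0 ≤ s) (hs1 : s ≤ 1)
    (h : ‖x - c‖ ≤ s * (1 - ‖c‖)) (k : ℕ) : ‖x ^ k - c ^ k‖ ≤ s * (1 - ‖c‖ ^ k) := by
  have hconvex := (convexOn_pow k).2 (norm_nonneg c) (zero_le_one' ℝ) (sub_nonneg.2 hs1) hs0
    (sub_add_cancel 1 s)
  simp only [smul_eq_mul, one_pow] at hconvex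
  linarith [norm_pow_sub_pow_le_convexComb h k]

theorem norm_pow_sub_pow_lt_mul_one_sub (hs0 : 0 < s) (hs1 : s < 1) (hc : ‖c‖ < 1)
    (h : ‖x - c‖ ≤ s * (1 - ‖c‖)) {k : ℕ} (hk : 2 ≤ k) :
    ‖x ^ k - c ^ k‖ < s * (1 - ‖c‖ ^ k) := by
  have hconvex := (strictConvexOn_pow hk).2 (norm_nonneg c) (zero_le_one' ℝ) hc.ne
    (sub_pos.2 hs1) hs0 (sub_add_cancel 1 s)
  simp only [smul_eq_mul, one_pow] at hconvex
  linarith [norm_pow_sub_pow_le_convexComb h k]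

namespace NormSumLeOne

variable {a : ℕ → R}

theorem summable_norm_mul_one_sub_pow {R : Type*} [NormedRing R] {a : ℕ → R} (ha : NormSumLeOne a)
    (s : ℝ) {c : R} (hc : ‖c‖ ≤ 1) : Summable fun k => ‖a k‖ * (s * (1 - ‖c‖ ^ k)) := by
  refine .of_norm_bounded (ha.summable_norm.mul_right |s|) fun k => ?_
  have hpow : ‖c‖ ^ k ≤ 1 := pow_le_one₀ (norm_nonneg c) hc
  have : |1 - ‖c‖ ^ k| ≤ 1 := by
    rw [abs_of_nonneg (sub_nonneg.2 hpow)]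
    exact sub_le_self 1 (by positivity)
  rw [norm_mul, norm_norm, norm_mul, Real.norm_eq_abs, Real.norm_eq_abs]
  gcongr
  exact mul_le_of_le_one_right (abs_nonneg s) this

theorem tsum_norm_mul_one_sub_pow_le (ha : NormSumLeOne a) (hs0 : 0 ≤ s) (hc : ‖c‖ ≤ 1) :
    ∑' k, ‖a k‖ * (s * (1 - ‖c‖ ^ k)) ≤ s * (1 - ‖seriesEval a c‖) := by
  have hsummable : Summable fun k => ‖a k‖ * ‖c‖ ^ k :=
    ha.summable_norm.of_nonneg_of_le (fun k => by positivity) fun k =>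
      mul_le_of_le_one_right (norm_nonneg _) (pow_le_one₀ (norm_nonneg c) hc)
  have hnorm : ‖seriesEval a c‖ ≤ ∑' k, ‖a k‖ * ‖c‖ ^ k :=
    tsum_of_norm_bounded hsummable.hasSum fun k => (norm_mul_le _ _).trans <|
      mul_le_mul_of_nonneg_left (norm_pow_le c k) (norm_nonneg _)
  calc ∑' k, ‖a k‖ * (s * (1 - ‖c‖ ^ k)) = ∑' k, s * (‖a k‖ - ‖a k‖ * ‖c‖ ^ k) :=
        tsum_congr fun k => by ring
    _ = s * (∑' k, ‖a k‖ - ∑' k, ‖a k‖ * ‖c‖ ^ k) := by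
        rw [tsum_mul_left, ha.summable_norm.tsum_sub hsummable]
    _ ≤ s * (1 - ‖seriesEval a c‖) := by
        gcongr
        exact ha.tsum_norm_le

theorem summable_norm_mul_norm_pow_sub_pow (ha : NormSumLeOne a) (hs0 : 0 ≤ s) (hs1 : s ≤ 1)
    (hc : ‖c‖ ≤ 1) (h : ‖x - c‖ ≤ s * (1 - ‖c‖)) :
    Summable fun k => ‖a k‖ * ‖x ^ k - c ^ k‖ :=
  (ha.summable_norm_mul_one_sub_pow s hc).of_nonneg_of_le (fun _ => by positivity) fun k =>
    mul_le_mul_of_nonneg_left (norm_pow_sub_pow_le_mul_one_sub hs0 hs1 h k) (norm_nonneg _)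

variable [CompleteSpace R]

theorem norm_seriesEval_sub_le_tsum (ha : NormSumLeOne a) (hs0 : 0 ≤ s) (hs1 : s ≤ 1)
    (hc : ‖c‖ ≤ 1) (h : ‖x - c‖ ≤ s * (1 - ‖c‖)) :
    ‖seriesEval a x - seriesEval a c‖ ≤ ∑' k, ‖a k‖ * ‖x ^ k - c ^ k‖ := by
  have hx : ‖x‖ ≤ 1 := norm_le_one_of_norm_sub_le hs1 hc h
  rw [seriesEval, seriesEval, ← (ha.summable_mul_pow hx).tsum_sub (ha.summable_mul_pow hc)]
  refine tsum_of_norm_bounded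
    (ha.summable_norm_mul_norm_pow_sub_pow hs0 hs1 hc h).hasSum fun k => ?_
  rw [← mul_sub]
  exact norm_mul_le _ _

theorem norm_seriesEval_sub_le (ha : NormSumLeOne a) (hs0 : 0 ≤ s) (hs1 : s ≤ 1) (hc : ‖c‖ ≤ 1)
    (h : ‖x - c‖ ≤ s * (1 - ‖c‖)) :
    ‖seriesEval a x - seriesEval a c‖ ≤ s * (1 - ‖seriesEval a c‖) :=
  calc ‖seriesEval a x - seriesEval a c‖ ≤ ∑' k, ‖a k‖ * ‖x ^ k - c ^ k‖ :=
        ha.norm_seriesEval_sub_le_tsum hs0 hs1 hc h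
    _ ≤ ∑' k, ‖a k‖ * (s * (1 - ‖c‖ ^ k)) :=
        (ha.summable_norm_mul_norm_pow_sub_pow hs0 hs1 hc h).tsum_le_tsum
          (fun k => mul_le_mul_of_nonneg_left (norm_pow_sub_pow_le_mul_one_sub hs0 hs1 h k)
            (norm_nonneg _))
          (ha.summable_norm_mul_one_sub_pow s hc)
    _ ≤ s * (1 - ‖seriesEval a c‖) := ha.tsum_norm_mul_one_sub_pow_le hs0 hc

theorem norm_seriesEval_sub_lt (ha : NormSumLeOne a) {j : ℕ} (hj : 2 ≤ j) (haj : a j ≠ 0)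
    (hs0 : 0 < s) (hs1 : s < 1) (hc : ‖c‖ < 1) (h : ‖x - c‖ ≤ s * (1 - ‖c‖)) :
    ‖seriesEval a x - seriesEval a c‖ < s * (1 - ‖seriesEval a c‖) :=
  calc ‖seriesEval a x - seriesEval a c‖ ≤ ∑' k, ‖a k‖ * ‖x ^ k - c ^ k‖ :=
        ha.norm_seriesEval_sub_le_tsum hs0.le hs1.le hc.le h
    _ < ∑' k, ‖a k‖ * (s * (1 - ‖c‖ ^ k)) :=
        Summable.tsum_lt_tsum
          (fun k => mul_le_mul_of_nonneg_left
            (norm_pow_sub_pow_le_mul_one_sub hs0.le hs1.le h k) (norm_nonneg _))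
          (mul_lt_mul_of_pos_left (norm_pow_sub_pow_lt_mul_one_sub hs0 hs1 hc h hj)
            (norm_pos_iff.2 haj))
          (ha.summable_norm_mul_norm_pow_sub_pow hs0.le hs1.le hc.le h)
          (ha.summable_norm_mul_one_sub_pow s hc.le)
    _ ≤ s * (1 - ‖seriesEval a c‖) := ha.tsum_norm_mul_one_sub_pow_le hs0.le hc.le

end NormSumLeOne

end SchwarzPick

section Dynamics

section RelGap

/-- The least `s ≥ 0` with `‖x - c‖ ≤ s * (1 - ‖c‖)`, for `‖c‖ < 1`: the quantity that power series
with coefficients in the unit ball of `ℓ¹` do not increase. It is `0` by convention if `‖c‖ = 1`. -/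
noncomputable def relGap {E : Type*} [NormedAddCommGroup E] (x c : E) : ℝ :=
  ‖x - c‖ / (1 - ‖c‖)

variable {E : Type*} [NormedAddCommGroup E] {x c : E} {s : ℝ}

theorem relGap_nonneg (x : E) (hc : ‖c‖ ≤ 1) : 0 ≤ relGap x c :=
  div_nonneg (norm_nonneg _) (sub_nonneg.2 hc)

theorem relGap_le (hs : 0 ≤ s) (hc : ‖c‖ ≤ 1) (h : ‖x - c‖ ≤ s * (1 - ‖c‖)) : relGap x c ≤ s :=
  div_le_of_le_mul₀ (sub_nonneg.2 hc) hs h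

theorem norm_sub_eq_relGap_mul (h : ‖x - c‖ ≤ s * (1 - ‖c‖)) :
    ‖x - c‖ = relGap x c * (1 - ‖c‖) := by
  refine (div_mul_cancel_of_imp fun hc => ?_).symm
  rw [hc, mul_zero] at h
  exact le_antisymm h (norm_nonneg _)

theorem norm_sub_eq_mul_of_tendsto {ι : Type*} {l : Filter ι} [l.NeBot] {u v : ι → E} {ρ : ι → ℝ}
    (hu : Tendsto u l (𝓝 x)) (hv : Tendsto v l (𝓝 c)) (hρ : Tendsto ρ l (𝓝 s))
    (h : ∀ i, ‖u i - v i‖ = ρ i * (1 - ‖v i‖)) : ‖x - c‖ = s * (1 - ‖c‖) :=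
  tendsto_nhds_unique (hu.sub hv).norm <| by
    simpa only [h] using hρ.mul (hv.norm.const_sub 1)

end RelGap

/-- The map `f` satisfies the Schwarz–Pick type estimate `‖f x - f c‖ ≤ s * (1 - ‖f c‖)` whenever
`‖x - c‖ ≤ s * (1 - ‖c‖)`, on the closed unit ball. With `x = c` and `s = 1` it says in particular
that `f` maps this ball to itself. -/
def IsRelGapNonincreasing {E : Type*} [NormedAddCommGroup E] (f : E → E) : Prop :=
  ∀ ⦃x c : E⦄ ⦃s : ℝ⦄, 0 ≤ s → s ≤ 1 → ‖c‖ ≤ 1 → ‖x - c‖ ≤ s * (1 - ‖c‖) →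
    ‖f x - f c‖ ≤ s * (1 - ‖f c‖)

/-- The estimate of `IsRelGapNonincreasing` holds with strict inequality away from the extreme cases
`s = 0`, `s = 1` and `‖c‖ = 1`. -/
def IsRelGapStrictDecreasing {E : Type*} [NormedAddCommGroup E] (f : E → E) : Prop :=
  ∀ ⦃x c : E⦄ ⦃s : ℝ⦄, 0 < s → s < 1 → ‖c‖ < 1 → ‖x - c‖ ≤ s * (1 - ‖c‖) →
    ‖f x - f c‖ < s * (1 - ‖f c‖)

theorem IsRelGapStrictDecreasing.eq_of_norm_sub_eq {E : Type*} [NormedAddCommGroup E] {f : E → E}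
    (hf : IsRelGapStrictDecreasing f) {x c : E} {s : ℝ} (hs0 : 0 ≤ s) (hs1 : s < 1)
    (hc : ‖c‖ ≤ 1) (h : ‖x - c‖ = s * (1 - ‖c‖)) (hmap : ‖f x - f c‖ = s * (1 - ‖f c‖)) :
    x = c := by
  by_contra hne
  have hpos : 0 < s * (1 - ‖c‖) := h ▸ norm_pos_iff.2 (sub_ne_zero.2 hne)
  have hs : 0 < s := pos_of_mul_pos_left hpos (sub_nonneg.2 hc)
  have hc1 : ‖c‖ < 1 := sub_pos.1 (pos_of_mul_pos_right hpos hs0)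
  exact (hf hs hs1 hc1 h.le).ne hmap

namespace IsRelGapNonincreasing

variable {E : Type*} [NormedAddCommGroup E] {f : E → E} {x c : E} {r : ℝ}

theorem norm_map_le_one (hf : IsRelGapNonincreasing f) (hc : ‖c‖ ≤ 1) : ‖f c‖ ≤ 1 := by
  simpa using hf (x := c) zero_le_one le_rfl hc (by simpa using hc)

theorem norm_iterate_le_one (hf : IsRelGapNonincreasing f) (hc : ‖c‖ ≤ 1) (n : ℕ) :
    ‖f^[n] c‖ ≤ 1 := by
  induction n with
  | zero => exact hc
  | succ n ih =>
    rw [Function.iterate_succ_apply']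
    exact hf.norm_map_le_one ih

theorem iterate (hf : IsRelGapNonincreasing f) (n : ℕ) : IsRelGapNonincreasing f^[n] := by
  induction n with
  | zero => exact fun x c s _ _ _ h => h
  | succ n ih =>
    intro x c s hs0 hs1 hc h
    rw [Function.iterate_succ_apply', Function.iterate_succ_apply']
    exact hf hs0 hs1 (hf.norm_iterate_le_one hc n) (ih hs0 hs1 hc h)

theorem exists_tendsto_relGap_iterate (hf : IsRelGapNonincreasing f) (hr0 : 0 ≤ r) (hr1 : r ≤ 1)
    (hc : ‖c‖ ≤ 1) (h : ‖x - c‖ ≤ r * (1 - ‖c‖)) :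
    ∃ σ, 0 ≤ σ ∧ σ ≤ r ∧ Tendsto (fun n => relGap (f^[n] x) (f^[n] c)) atTop (𝓝 σ) := by
  have hcn := hf.norm_iterate_le_one hc
  have hbound (n : ℕ) : ‖f^[n] x - f^[n] c‖ ≤ r * (1 - ‖f^[n] c‖) := hf.iterate n hr0 hr1 hc h
  have hnonneg (n : ℕ) : 0 ≤ relGap (f^[n] x) (f^[n] c) := relGap_nonneg _ (hcn n)
  have hle (n : ℕ) : relGap (f^[n] x) (f^[n] c) ≤ r := relGap_le hr0 (hcn n) (hbound n)
  have hanti : Antitone fun n => relGap (f^[n] x) (f^[n] c) := by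
    refine antitone_nat_of_succ_le fun n => relGap_le (hnonneg n) (hcn (n + 1)) ?_
    rw [Function.iterate_succ_apply', Function.iterate_succ_apply']
    exact hf (hnonneg n) ((hle n).trans hr1) (hcn n) (norm_sub_eq_relGap_mul (hbound n)).le
  have hlim := tendsto_atTop_ciInf hanti ⟨0, Set.forall_mem_range.2 hnonneg⟩
  exact ⟨_, ge_of_tendsto' hlim hnonneg, le_of_tendsto' hlim hle, hlim⟩

theorem tendsto_iterate_sub_iterate [ProperSpace E] (hf : IsRelGapNonincreasing f)
    (hstrict : IsRelGapStrictDecreasing f) (hcont : ContinuousOn f (Metric.closedBall 0 1))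
    (hr0 : 0 ≤ r) (hr1 : r < 1) (hc : ‖c‖ ≤ 1) (h : ‖x - c‖ ≤ r * (1 - ‖c‖)) :
    Tendsto (fun n => f^[n] x - f^[n] c) atTop (𝓝 0) := by
  obtain ⟨σ, hσ0, hσr, hσ⟩ := hf.exists_tendsto_relGap_iterate hr0 hr1.le hc h
  have hgap (n : ℕ) : ‖f^[n] x - f^[n] c‖ = relGap (f^[n] x) (f^[n] c) * (1 - ‖f^[n] c‖) :=
    norm_sub_eq_relGap_mul (hf.iterate n hr0 hr1.le hc h)
  have hball {y : E} (hy : ‖y‖ ≤ 1) (n : ℕ) : f^[n] y ∈ Metric.closedBall 0 1 :=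
    mem_closedBall_zero_iff.2 (hf.norm_iterate_le_one hy n)
  have hx : ‖x‖ ≤ 1 := norm_le_one_of_norm_sub_le hr1.le hc h
  have hcompact := (isCompact_closedBall (0 : E) 1).prod (isCompact_closedBall (0 : E) 1)
  refine tendsto_of_subseq_tendsto fun ns hns => ?_
  obtain ⟨⟨ξ, γ⟩, ⟨hξ, hγ⟩, φ, hφ, hlim⟩ :=
    hcompact.tendsto_subseq fun n => Set.mk_mem_prod (hball hx (ns n)) (hball hc (ns n))
  have hms : Tendsto (ns ∘ φ) atTop atTop := hns.comp hφ.tendsto_atTop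
  have hlimξ : Tendsto (fun n => f^[ns (φ n)] x) atTop (𝓝 ξ) := hlim.fst_nhds
  have hlimγ : Tendsto (fun n => f^[ns (φ n)] c) atTop (𝓝 γ) := hlim.snd_nhds
  have hnext {y η : E} (hy : ‖y‖ ≤ 1) (hη : η ∈ Metric.closedBall 0 1)
      (hyη : Tendsto (fun n => f^[ns (φ n)] y) atTop (𝓝 η)) :
      Tendsto (fun n => f^[ns (φ n) + 1] y) atTop (𝓝 (f η)) := by
    simp_rw [Function.iterate_succ_apply']
    exact (hcont η hη).tendsto.comp
      (tendsto_nhdsWithin_iff.2 ⟨hyη, .of_forall fun n => hball hy _⟩)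
  have hpoint : ‖ξ - γ‖ = σ * (1 - ‖γ‖) :=
    norm_sub_eq_mul_of_tendsto hlimξ hlimγ (hσ.comp hms) fun n => hgap _
  have himage : ‖f ξ - f γ‖ = σ * (1 - ‖f γ‖) :=
    norm_sub_eq_mul_of_tendsto (hnext hx hξ hlimξ) (hnext hc hγ hlimγ)
      (hσ.comp ((tendsto_add_atTop_nat 1).comp hms)) fun n => hgap _
  obtain rfl : ξ = γ := hstrict.eq_of_norm_sub_eq hσ0 (hσr.trans_lt hr1)
    (mem_closedBall_zero_iff.1 hγ) hpoint himage
  exact ⟨φ, by simpa only [sub_self] using hlimξ.sub hlimγ⟩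

end IsRelGapNonincreasing

theorem tendsto_iterate_sub_iterate_of_lipschitzWith {E : Type*} [NormedAddCommGroup E] {f : E → E}
    {K : NNReal} (hK : K < 1) (hf : LipschitzWith K f) (x c : E) :
    Tendsto (fun n => f^[n] x - f^[n] c) atTop (𝓝 0) := by
  have hlim : Tendsto (fun n => (K : ℝ) ^ n * ‖x - c‖) atTop (𝓝 0) := by
    simpa using (tendsto_pow_atTop_nhds_zero_of_lt_one K.coe_nonneg hK).mul_const ‖x - c‖
  refine squeeze_zero_norm (fun n => ?_) hlim
  simpa [dist_eq_norm] using (hf.iterate n).dist_le_mul x c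

section SeriesEval

variable {R : Type*} [NormedRing R] {a : ℕ → R} {t : R}

theorem lipschitzWith_seriesEval_of_forall_two_le (ha : ∀ k, 2 ≤ k → a k = 0) :
    LipschitzWith ‖a 1‖₊ (seriesEval a) :=
  .of_dist_le_mul fun x y => by
    rw [seriesEval_eq_add_of_forall_two_le ha, seriesEval_eq_add_of_forall_two_le ha,
      dist_add_left, dist_eq_norm, dist_eq_norm, ← mul_sub]
    exact norm_mul_le _ _

theorem tendsto_iterate_seriesEval_sub [NormOneClass R] [ProperSpace R] (ha : NormSumLeOne a)
    (ha1 : ‖a 1‖ < 1) (ht : ‖t‖ < 1) :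
    Tendsto (fun n => (seriesEval a)^[n] t - (seriesEval a)^[n] 0) atTop (𝓝 0) := by
  by_cases haffine : ∀ k, 2 ≤ k → a k = 0
  · exact tendsto_iterate_sub_iterate_of_lipschitzWith ha1
      (lipschitzWith_seriesEval_of_forall_two_le haffine) t 0
  · push Not at haffine
    obtain ⟨j, hj, haj⟩ := haffine
    have hgap : IsRelGapNonincreasing (seriesEval a) := fun _ _ _ => ha.norm_seriesEval_sub_le
    have hstrict : IsRelGapStrictDecreasing (seriesEval a) :=
      fun _ _ _ => ha.norm_seriesEval_sub_lt hj haj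
    exact hgap.tendsto_iterate_sub_iterate hstrict ha.continuousOn_seriesEval
      (norm_nonneg t) ht (by simp) (by simp)

end SeriesEval

end Dynamics

theorem stmt18_general (a : ℕ → ℝ) (ha1 : |a 1| < 1) (hsummable : Summable (fun k => |a k|))
    (hsum : ∑' k : ℕ, |a k| ≤ 1) (t : ℝ) (ht : t ∈ Set.Ioo (-1 : ℝ) 1) :
    Tendsto (fun n => ∑' k : ℕ, iterCoeff a n k * t ^ k - iterCoeff a n 0) atTop (𝓝 0) := by
  have ha : NormSumLeOne a := ⟨hsummable, hsum⟩
  have ht1 : ‖t‖ < 1 := abs_lt.2 ht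
  refine ((tendsto_add_atTop_iff_nat 1).2 (tendsto_iterate_seriesEval_sub ha ha1 ht1)).congr
    fun n => ?_
  rw [← seriesEval_iterCoeff ha n ht1.le, ← seriesEval_iterCoeff ha n (by simp), seriesEval_zero,
    seriesEval]

/-- For `p(t) = Σ a_k t^k` with `|a_k| < 1` and `Σ |a_k| ≤ 1`: if the constant terms
`a₀^[n]` of the iterates converge to `α`, then `p^[n](t) → α` for every `t ∈ (-1,1)`. -/
theorem stmt18 (a : ℕ → ℝ) (ha1 : ∀ k, |a k| < 1)
    (hsummable : Summable (fun k => |a k|)) (hsum : ∑' k : ℕ, |a k| ≤ 1)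
    (α : ℝ) (h0 : Tendsto (fun n => iterCoeff a n 0) atTop (nhds α)) :
    ∀ t ∈ Set.Ioo (-1 : ℝ) 1,
      Tendsto (fun n => ∑' k : ℕ, iterCoeff a n k * t ^ k) atTop (nhds α) := fun t ht => by
  simpa using (stmt18_general a (ha1 1) hsummable hsum t ht).add h0
end
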